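/- Let d ≥ 5 and let C be a clustering, with at least two clusters, of an n-element configuration in Z^d such that every cluster has at most 3 elements. There is a number c = c(d) > 0 such that for every x ∈ π(C), writing i for the index of the cluster of C containing x, H_{π(C)}(x) ≥ (1 − c·n·sep(C)^{2−d})·H_C(i,x). -/

import Mathlib

open MeasureTheory

namespace HATFormal

/-- Points of the lattice `ℤ^d`. -/
abbrev Pt (d : ℕ) := Fin d → ℤ

/-- The `2d` unit steps of the simple random walk on `ℤ^d`. -/
def Dir (d : ℕ) : Set (Pt d) :=
  {s | ∃ i : Fin d, s = Pi.single i 1 ∨ s = Pi.single i (-1)}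

/-- The position, after `t` steps, of the walk started at `x` with steps `s`. -/
def wpos (d : ℕ) (x : Pt d) {T : ℕ} (s : Fin T → Pt d) (t : ℕ) : Pt d :=
  x + ∑ i ∈ Finset.univ.filter (fun i : Fin T => (i : ℕ) < t), s i

/-- The probability of an event `P` of the first `T` steps of simple random walk on `ℤ^d`. -/
noncomputable def prob (d T : ℕ) (P : (Fin T → Pt d) → Prop) : ℝ :=
  (Nat.card {s : Fin T → Pt d // (∀ i, s i ∈ Dir d) ∧ P s} : ℝ) / ((2 * d : ℕ) : ℝ) ^ T

open Classical in
/-- `esc d A x = P_x(τ_A = ∞)` if `x ∈ A`, and `0` otherwise. -/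
noncomputable def esc (d : ℕ) (A : Set (Pt d)) (x : Pt d) : ℝ :=
  if x ∈ A then ⨅ T : ℕ, prob d T (fun s => ∀ t, 1 ≤ t → t ≤ T → wpos d x s t ∉ A) else 0

/-- The capacity of `A`. -/
noncomputable def capa (d : ℕ) (A : Set (Pt d)) : ℝ := ∑' x : A, esc d A (x : Pt d)

/-- The harmonic measure `H_A(x) = esc_A(x) / cap_A`. -/
noncomputable def harm (d : ℕ) (A : Set (Pt d)) (x : Pt d) : ℝ := esc d A x / capa d A

/-- `P_x(τ_W < ∞)`. -/
noncomputable def retProb (d : ℕ) (W : Set (Pt d)) (x : Pt d) : ℝ :=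
  ∑' t : ℕ, prob d t (fun s => 1 ≤ t ∧ wpos d x s t ∈ W ∧
    ∀ u, 1 ≤ u → u < t → wpos d x s u ∉ W)

/-- `P_x(τ_W < ∞ and S_{τ_W − 1} = y)`. -/
noncomputable def hitFrom (d : ℕ) (W : Set (Pt d)) (x y : Pt d) : ℝ :=
  ∑' t : ℕ, prob d t (fun s => 1 ≤ t ∧ wpos d x s t ∈ W ∧ wpos d x s (t - 1) = y ∧
    ∀ u, 1 ≤ u → u < t → wpos d x s u ∉ W)

/-- `P_x(τ_W < ∞ and S_{τ_W} ∈ T)`. -/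
noncomputable def firstHitIn (d : ℕ) (W T : Set (Pt d)) (x : Pt d) : ℝ :=
  ∑' t : ℕ, prob d t (fun s => 1 ≤ t ∧ wpos d x s t ∈ W ∧ wpos d x s t ∈ T ∧
    ∀ u, 1 ≤ u → u < t → wpos d x s u ∉ W)

/-- `P_x(S_{τ_W − 1} = y ∣ τ_W < ∞)`. -/
noncomputable def transP (d : ℕ) (W : Set (Pt d)) (x y : Pt d) : ℝ :=
  hitFrom d W x y / retProb d W x

/-- The Green's function of simple random walk on `ℤ^d`. -/
noncomputable def green (d : ℕ) (x : Pt d) : ℝ :=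
  ∑' t : ℕ, prob d t (fun s => wpos d x s t = 0)

/-- Configurations: finite subsets of `ℤ^d`. -/
abbrev Conf (d : ℕ) := Finset (Pt d)

/-- `p_U(x, y)`, the probability that HAT activates at `x` and transports to `y`. -/
noncomputable def pHAT (d : ℕ) (U : Conf d) (x y : Pt d) : ℝ :=
  harm d (↑U) x * transP d ((↑U : Set (Pt d)) \ {x}) x y

open Classical in
/-- The transition probabilities of HAT. -/
noncomputable def hatProb (d : ℕ) (U V : Conf d) : ℝ :=
  if V = U then ∑' z : Pt d, pHAT d U z z
  else ∑' x : Pt d, ∑' y : Pt d,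
    if x ∈ U ∧ x ≠ y ∧ V = insert y (U.erase x) then pHAT d U x y else 0

instance (d : ℕ) : MeasurableSpace (Conf d) := ⊤

/-- `μ` is the law of HAT started from `U`. -/
def IsHATLaw (d : ℕ) (U : Conf d) (μ : Measure (ℕ → Conf d)) : Prop :=
  IsProbabilityMeasure μ ∧
  ∀ (t : ℕ) (u : ℕ → Conf d),
    μ {ω | ∀ s ≤ t, ω s = u s} =
      (if u 0 = U then 1 else 0) *
        ∏ s ∈ Finset.range t, ENNReal.ofReal (hatProb d (u s) (u (s + 1)))

/-- A signed permutation plus translation of `ℤ^d`. -/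
def SymImage (d : ℕ) (σ : Equiv.Perm (Fin d)) (ε : Fin d → ℤ) (v : Pt d) (x : Pt d) : Pt d :=
  fun i => v i + ε i * x (σ i)

/-- `SymEq d U V` holds when `V = gU` for a symmetry `g` of `ℤ^d`. -/
def SymEq (d : ℕ) (U V : Conf d) : Prop :=
  ∃ (σ : Equiv.Perm (Fin d)) (ε : Fin d → ℤ) (v : Pt d),
    (∀ i, ε i = 1 ∨ ε i = -1) ∧ V = U.image (SymImage d σ ε v)

/-- Euclidean distance on `ℤ^d`. -/
noncomputable def dist0 (d : ℕ) (x y : Pt d) : ℝ :=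
  Real.sqrt (∑ i, ((x i : ℝ) - (y i : ℝ)) ^ 2)

/-- Euclidean distance between finite subsets of `ℤ^d`. -/
noncomputable def setDist (d : ℕ) (A B : Finset (Pt d)) : ℝ :=
  sInf {r : ℝ | ∃ x ∈ A, ∃ y ∈ B, r = dist0 d x y}

/-- Euclidean diameter of a finite subset of `ℤ^d`. -/
noncomputable def diam0 (d : ℕ) (A : Finset (Pt d)) : ℝ :=
  sSup {r : ℝ | ∃ x ∈ A, ∃ y ∈ A, r = dist0 d x y}

/-- Lattice (nearest-neighbor) adjacency in `ℤ^d`. -/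
def latAdj (d : ℕ) (x y : Pt d) : Prop := (∑ i, (x i - y i).natAbs) = 1

/-- Exterior lattice boundary of a set. -/
def bdry (d : ℕ) (A : Set (Pt d)) : Set (Pt d) := {z | z ∉ A ∧ ∃ w ∈ A, latAdj d z w}

/-- Non-isolated configurations: some exposed element has a lattice neighbor in the set. -/
def NonIso (d : ℕ) (U : Conf d) : Prop :=
  ∃ x ∈ U, 0 < esc d (↑U) x ∧ ∃ y ∈ U, latAdj d x y

/-- `C` is a clustering (ordered partition into nonempty clusters) of `U`. -/
def IsClusteringOf (d : ℕ) {k : ℕ} (C : Fin k → Finset (Pt d)) (U : Finset (Pt d)) : Prop :=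
  (∀ i, (C i).Nonempty) ∧ (∀ i j, i ≠ j → Disjoint (C i) (C j)) ∧
    Finset.univ.biUnion C = U

/-- `C^{≠ i}`, the union of the clusters other than `i`. -/
def others (d : ℕ) {k : ℕ} (C : Fin k → Finset (Pt d)) (i : Fin k) : Finset (Pt d) :=
  Finset.univ.biUnion fun j => if j = i then ∅ else C j

/-- The separation of a clustering. -/
noncomputable def sep (d : ℕ) {k : ℕ} (C : Fin k → Finset (Pt d)) : ℝ :=
  ⨅ i, setDist d (C i) (others d C i)

/-- `(a, b)` separated dimer-or-trimer (DOT) clusterings. -/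
def IsDOT (d : ℕ) {k : ℕ} (C : Fin k → Finset (Pt d)) (a b : ℝ) : Prop :=
  (∀ i, (C i).card = 2 ∨ (C i).card = 3) ∧ a ≤ sep d C ∧
    ∀ i, diam0 d (C i) ≤ b * Real.log (setDist d (C i) (others d C i))

/-- Clusterings with an unspecified number of clusters. -/
abbrev ClusteringS (d : ℕ) := Σ k : ℕ, Fin k → Finset (Pt d)

/-- `π(C)`, the union of the clusters of `C`. -/
def confOf (d : ℕ) (C : ClusteringS d) : Conf d := Finset.univ.biUnion C.2

/-- `C ∈ 𝒞(U, a, b)`. -/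
def InC (d : ℕ) (U : Conf d) (a b : ℝ) (C : ClusteringS d) : Prop :=
  IsClusteringOf d C.2 U ∧ IsDOT d C.2 a b

/-- `U ∈ 𝒰_{d,n}(a, b)`. -/
def InU (d n : ℕ) (a b : ℝ) (U : Conf d) : Prop :=
  U.card = n ∧ ∃ C : ClusteringS d, InC d U a b C

/-- `C` is a clustering of an `n`-element configuration. -/
def IsClusteringConf (d n : ℕ) (C : ClusteringS d) : Prop :=
  (∀ i, (C.2 i).Nonempty) ∧ (∀ i j, i ≠ j → Disjoint (C.2 i) (C.2 j)) ∧
    (confOf d C).card = n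

open Classical in
/-- One step of the natural clustering. -/
noncomputable def clustStep (d : ℕ) (Ut Ut1 : Conf d) (C : ClusteringS d) : ClusteringS d :=
  if Ut1 = Ut then C
  else if h : ∃ p : Pt d × Pt d × Fin C.1,
      Ut \ Ut1 = {p.1} ∧ Ut1 \ Ut = {p.2.1} ∧ p.1 ∈ C.2 p.2.2 then
    ⟨C.1, Function.update C.2 h.choose.2.2
      (insert h.choose.2.1 ((C.2 h.choose.2.2).erase h.choose.1))⟩
  else ⟨1, fun _ => Ut1⟩

/-- The natural clustering of the trajectory `ω` with initial clustering `C0`. -/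
noncomputable def natClust (d : ℕ) (ω : ℕ → Conf d) (C0 : ClusteringS d) : ℕ → ClusteringS d
  | 0 => C0
  | t + 1 => clustStep d (ω t) (ω (t + 1)) (natClust d ω C0 t)

/-- `a_s = s^{1/2 − n^{−100}} + 100 n`. -/
noncomputable def aSep (n s : ℕ) : ℝ :=
  (s : ℝ) ^ ((1 : ℝ) / 2 - (n : ℝ) ^ (-(100 : ℝ))) + 100 * n

/-- `C^{i, x, y}`: remove `x` from cluster `i` of `C` and add `y` to that cluster. -/
def updC (d : ℕ) (C : ClusteringS d) (i : Fin C.1) (x y : Pt d) : ClusteringS d :=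
  ⟨C.1, Function.update C.2 i (insert y ((C.2 i).erase x))⟩

open Classical in
/-- The transition probabilities of the lifting of HAT to clusterings. -/
noncomputable def liftProb (d : ℕ) (E0 E1 : ClusteringS d) : ℝ :=
  ∑' x : Pt d, ∑' y : Pt d,
    if ∃ i : Fin E0.1, x ∈ E0.2 i ∧ E1 = updC d E0 i x y
    then pHAT d (confOf d E0) x y else 0

/-- The capacity of a clustering: the sum of the capacities of its clusters. -/
noncomputable def capS (d : ℕ) (C : ClusteringS d) : ℝ := ∑ i, capa d (↑(C.2 i))

/-- `H_C(i, x) = esc_{C^i}(x) / cap_C`. -/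
noncomputable def harmS (d : ℕ) (C : ClusteringS d) (i : Fin C.1) (x : Pt d) : ℝ :=
  esc d (↑(C.2 i)) x / capS d C

/-- `q_C(i, x, y)`. -/
noncomputable def qIHAT (d : ℕ) (C : ClusteringS d) (i : Fin C.1) (x y : Pt d) : ℝ :=
  harmS d C i x * transP d ((↑(C.2 i) : Set (Pt d)) \ {x}) x y

open Classical in
/-- The transition probabilities of intracluster HAT (IHAT). -/
noncomputable def ihatProb (d : ℕ) (D E : ClusteringS d) : ℝ :=
  ∑' x : Pt d, ∑' y : Pt d, ∑ i : Fin D.1,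
    if x ∈ D.2 i ∧ E = updC d D i x y then qIHAT d D i x y else 0

instance (d : ℕ) : MeasurableSpace (ClusteringS d) := ⊤

open Classical in
/-- `μ` is the law of the lifted HAT chain started from `E0`. -/
def IsLiftLaw (d : ℕ) (E0 : ClusteringS d) (μ : Measure (ℕ → ClusteringS d)) : Prop :=
  IsProbabilityMeasure μ ∧
  ∀ (t : ℕ) (u : ℕ → ClusteringS d),
    μ {ω | ∀ s ≤ t, ω s = u s} =
      (if u 0 = E0 then 1 else 0) *
        ∏ s ∈ Finset.range t, ENNReal.ofReal (liftProb d (u s) (u (s + 1)))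

open Classical in
/-- `μ` is the law of intracluster HAT started from `D0`. -/
def IsIHATLaw (d : ℕ) (D0 : ClusteringS d) (μ : Measure (ℕ → ClusteringS d)) : Prop :=
  IsProbabilityMeasure μ ∧
  ∀ (t : ℕ) (u : ℕ → ClusteringS d),
    μ {ω | ∀ s ≤ t, ω s = u s} =
      (if u 0 = D0 then 1 else 0) *
        ∏ s ∈ Finset.range t, ENNReal.ofReal (ihatProb d (u s) (u (s + 1)))

/-- `Pairs(E0, E1)`. -/
def Pairs (d : ℕ) (E0 E1 : ClusteringS d) : Set (Pt d × Pt d) :=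
  {p | 0 < pHAT d (confOf d E0) p.1 p.2 ∧
    ∃ i : Fin E0.1, p.1 ∈ E0.2 i ∧ E1 = updC d E0 i p.1 p.2}

/-- `Triples(E0, E1)`. -/
def Triples (d : ℕ) (E0 E1 : ClusteringS d) : Set (Fin E0.1 × Pt d × Pt d) :=
  {q | 0 < qIHAT d E0 q.1 q.2.1 q.2.2 ∧ E1 = updC d E0 q.1 q.2.1 q.2.2}

/-- The first standard basis vector of `ℤ^d`. -/
def e1v (d : ℕ) : Pt d := fun i => if (i : ℕ) = 0 then 1 else 0

/-- Reference dimers and trimers. -/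
def Ref (d : ℕ) : Set (Finset (Pt d)) :=
  {A | ∃ x : Pt d, A = {x, x + e1v d} ∨ A = {x, x + e1v d, x + e1v d + e1v d}}

/-- *-adjacency in `ℤ^d`: distinct points differing by at most one in each coordinate. -/
def starAdj (d : ℕ) (x y : Pt d) : Prop := x ≠ y ∧ ∀ i, (x i - y i).natAbs ≤ 1

/-- The *-visible boundary of `A`. -/
def visBdry (d : ℕ) (A : Finset (Pt d)) : Set (Pt d) :=
  {x | (∃ y ∈ A, starAdj d x y) ∧
    ∃ γ : ℕ → Pt d, γ 0 = x ∧ (∀ t, latAdj d (γ t) (γ (t + 1))) ∧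
      (∀ t, γ t ∉ A) ∧ ∀ r : ℝ, ∃ t, r < dist0 d (γ t) 0}

/-- `A` is connected in the nearest-neighbor graph of `ℤ^d`. -/
def LatConnected (d : ℕ) (A : Finset (Pt d)) : Prop :=
  ∀ x ∈ A, ∀ y ∈ A, ∃ (L : ℕ) (γ : ℕ → Pt d), γ 0 = x ∧ γ L = y ∧
    (∀ t < L, latAdj d (γ t) (γ (t + 1))) ∧ ∀ t ≤ L, γ t ∈ A

/-- Strict lexicographic order on `ℤ^d`. -/
def lexLt (d : ℕ) (x y : Pt d) : Prop :=
  ∃ i : Fin d, (∀ j, j < i → x j = y j) ∧ x i < y i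

/-- `x` is the lex (least) element of `A`. -/
def IsLex (d : ℕ) (A : Finset (Pt d)) (x : Pt d) : Prop :=
  x ∈ A ∧ ∀ y ∈ A, y ≠ x → lexLt d x y


lemma taylor_aux (α : ℝ) (hα : 0 < α) : ∃ η > 0, ∃ c ≥ 0, ∃ D ≥ 0, ∀ w : ℝ, |w| ≤ η →
    0 < 1 + w ∧ (1 + w) ^ (-α) ≤
      1 - α * w + (α * (α + 1) / 2) * w ^ 2 - c * w ^ 3 + D * w ^ 4 := by
  obtain ⟨c, hc⟩ : ∃ c : ℝ, 3 * c = (α + 2) * (α * (α + 1) / 2) := ⟨_, mul_div_cancel₀ _ (by norm_num)⟩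
  have hc0 : 0 < c := by
    have : 0 < (α + 2) * (α * (α + 1) / 2) := by positivity
    linarith
  set D := (α + 3) * c with hD
  have hD0 : 0 < D := by positivity
  have hη : 0 < 1 / (α + 4) := by positivity
  refine ⟨1 / (α + 4), hη, c, hc0.le, D, hD0.le, ?_⟩
  have hη1 : 1 / (α + 4) < 1 := by
    rw [div_lt_one (by positivity)]; linarith
  set P : ℝ → ℝ := fun w => 1 - α * w + (α * (α + 1) / 2) * w ^ 2 - c * w ^ 3 + D * w ^ 4 with hP
  set F : ℝ → ℝ := fun w => (1 + w) ^ α * P w with hF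
  have hder : ∀ w : ℝ, 0 < 1 + w → HasDerivAt F ((1 + w) ^ (α - 1) * (w ^ 3 * D * (3 + (α + 4) * w))) w := by
    intro w hw
    have h1 : HasDerivAt (fun w : ℝ => (1 + w) ^ α) (1 * α * (1 + w) ^ (α - 1)) w :=
      ((hasDerivAt_id w).const_add 1).rpow_const (Or.inl hw.ne')
    have h2 : HasDerivAt P (0 - α * 1 + (α * (α + 1) / 2) * ((2 : ℕ) * w ^ (2 - 1)) - c * ((3 : ℕ) * w ^ (3 - 1)) + D * ((4 : ℕ) * w ^ (4 - 1))) w :=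
      ((((hasDerivAt_const w (1 : ℝ)).sub ((hasDerivAt_id w).const_mul α)).add
        ((hasDerivAt_pow 2 w).const_mul _)).sub ((hasDerivAt_pow 3 w).const_mul c)).add
        ((hasDerivAt_pow 4 w).const_mul D)
    have h3 : HasDerivAt F _ w := h1.mul h2
    refine h3.congr_deriv (Eq.symm ?_)
    have : (1 + w) ^ α = (1 + w) ^ (α - 1) * (1 + w) := by
      rw [← Real.rpow_add_one hw.ne']; congr 1; ring
    rw [this]
    simp only [hP]
    push_cast
    obtain ⟨X, hX⟩ : ∃ X, X = (1 + w) ^ (α - 1) := ⟨_, rfl⟩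
    rw [← hX]
    have hc' : c = (α + 2) * (α * (α + 1) / 2) / 3 := by linarith
    rw [hD, hc']
    ring
  have hpos : ∀ w : ℝ, |w| ≤ 1 / (α + 4) → 0 < 1 + w ∧ 0 < 3 + (α + 4) * w := by
    intro w hw
    have h1 := (abs_le.1 hw).1
    refine ⟨by linarith, ?_⟩
    have : (α + 4) * (-(1 / (α + 4))) ≤ (α + 4) * w := mul_le_mul_of_nonneg_left h1 (by positivity)
    have h2 : (α + 4) * (-(1 / (α + 4))) = -1 := by field_simp
    linarith
  have hF0 : F 0 = 1 := by simp [hF, hP]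
  have hF1 : ∀ w : ℝ, |w| ≤ 1 / (α + 4) → 1 ≤ F w := by
    intro w hw
    rcases le_total 0 w with h | h
    · have hm : MonotoneOn F (Set.Icc 0 (1 / (α + 4))) := by
        have hd : ∀ v ∈ Set.Icc 0 (1 / (α + 4)), HasDerivAt F _ v := fun v hv =>
          hder v (hpos v (by rw [abs_of_nonneg hv.1]; exact hv.2)).1
        apply monotoneOn_of_deriv_nonneg (convex_Icc _ _)
        · exact fun v hv => (hd v hv).continuousAt.continuousWithinAt
        · intro v hv
          exact (hd v (interior_subset hv)).differentiableAt.differentiableWithinAt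
        · intro v hv
          have hv := interior_subset hv
          rw [(hd v hv).deriv]
          have := hpos v (by rw [abs_of_nonneg hv.1]; exact hv.2)
          have h3 := hv.1
          have h4 := this.1
          have h5 := this.2
          positivity
      rw [abs_of_nonneg h] at hw
      rw [← hF0]
      exact hm ⟨le_rfl, hη.le⟩ ⟨h, hw⟩ h
    · have hm : AntitoneOn F (Set.Icc (-(1 / (α + 4))) 0) := by
        have hd : ∀ v ∈ Set.Icc (-(1 / (α + 4))) 0, HasDerivAt F _ v := fun v hv =>
          hder v (hpos v (by rw [abs_of_nonpos hv.2]; linarith [hv.1])).1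
        apply antitoneOn_of_deriv_nonpos (convex_Icc _ _)
        · exact fun v hv => (hd v hv).continuousAt.continuousWithinAt
        · intro v hv
          exact (hd v (interior_subset hv)).differentiableAt.differentiableWithinAt
        · intro v hv
          have hv := interior_subset hv
          rw [(hd v hv).deriv]
          have := hpos v (by rw [abs_of_nonpos hv.2]; linarith [hv.1])
          have h4 := this.1
          have h5 := this.2
          have h6 : v ^ 3 ≤ 0 := by
            have := hv.2
            nlinarith [mul_nonneg (sq_nonneg v) (neg_nonneg.2 this)]
          have h7 : 0 ≤ (1 + v) ^ (α - 1) := by positivity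
          exact mul_nonpos_of_nonneg_of_nonpos h7
            (mul_nonpos_of_nonpos_of_nonneg (mul_nonpos_of_nonpos_of_nonneg h6 hD0.le) h5.le)
      rw [abs_of_nonpos h] at hw
      rw [← hF0]
      exact hm ⟨by linarith, h⟩ ⟨by linarith, le_rfl⟩ h
  intro w hw
  have h1 := (hpos w hw).1
  refine ⟨h1, ?_⟩
  have h2 := hF1 w hw
  rw [Real.rpow_neg h1.le, inv_le_iff_one_le_mul₀ (by positivity), mul_comm]
  exact h2

lemma superharm_aux (d : ℕ) (hd : 3 ≤ d) : ∃ K : ℝ, 1 ≤ K ∧ ∀ z : Fin d → ℝ,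
    ∑ i, (((∑ j, z j ^ 2) + K + 1 + 2 * z i) ^ (-((d : ℝ) - 2) / 2) +
      ((∑ j, z j ^ 2) + K + 1 - 2 * z i) ^ (-((d : ℝ) - 2) / 2)) ≤
      2 * d * ((∑ j, z j ^ 2) + K) ^ (-((d : ℝ) - 2) / 2) := by
  have hd' : (3 : ℝ) ≤ d := by exact_mod_cast hd
  obtain ⟨α, hα⟩ : ∃ α : ℝ, α = ((d : ℝ) - 2) / 2 := ⟨_, rfl⟩
  have hα0 : 0 < α := by rw [hα]; linarith
  have hneg : -((d : ℝ) - 2) / 2 = -α := by rw [hα]; ring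
  rw [hneg]
  obtain ⟨η, hη, c, hc, D, hD, hT⟩ := taylor_aux α hα0
  obtain ⟨b, hb⟩ : ∃ b, b = α * (α + 1) / 2 := ⟨_, rfl⟩
  have hb0 : 0 < b := by rw [hb]; positivity
  rw [← hb] at hT
  refine ⟨max 1 (max (10 / η ^ 2) ((2 * b * d + 200 * D * d) / (8 * b))), le_max_left _ _, ?_⟩
  set K := max 1 (max (10 / η ^ 2) ((2 * b * d + 200 * D * d) / (8 * b)))
  have hK1 : 1 ≤ K := le_max_left _ _
  have hK2 : 10 ≤ K * η ^ 2 := by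
    rw [← div_le_iff₀ (by positivity)]
    exact (le_max_left _ _).trans (le_max_right _ _)
  have hK3 : 2 * b * d + 200 * D * d ≤ K * (8 * b) := by
    rw [← div_le_iff₀ (by positivity)]
    exact (le_max_right _ _).trans (le_max_right _ _)
  intro z
  obtain ⟨s, hs⟩ : ∃ s, s = (∑ j, z j ^ 2) + K := ⟨_, rfl⟩
  rw [← hs]
  have hsK : K ≤ s := by
    rw [hs]; have : 0 ≤ ∑ j, z j ^ 2 := Finset.sum_nonneg fun _ _ => sq_nonneg _
    linarith
  have hs1 : 1 ≤ s := hK1.trans hsK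
  have hs0 : 0 < s := by linarith
  have hz : ∀ i, z i ^ 2 ≤ s := by
    intro i
    have := Finset.single_le_sum (f := fun j => z j ^ 2) (fun _ _ => sq_nonneg _) (Finset.mem_univ i)
    linarith
  have hfac : ∀ v : ℝ, 0 < 1 + v / s → (s + v) ^ (-α) = s ^ (-α) * (1 + v / s) ^ (-α) := by
    intro v hv
    rw [← Real.mul_rpow hs0.le hv.le]
    congr 1
    field_simp
  have hη2 : ∀ v : ℝ, v ^ 2 ≤ 10 * s → |v / s| ≤ η ∧ (v / s) ^ 4 ≤ 100 / s ^ 2 := by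
    intro v hv
    constructor
    · apply abs_le_of_sq_le_sq _ hη.le
      rw [div_pow, div_le_iff₀ (by positivity)]
      nlinarith [mul_le_mul_of_nonneg_right (hK2.trans (mul_le_mul_of_nonneg_right hsK (sq_nonneg η))) hs0.le]
    · rw [div_pow, div_le_div_iff₀ (by positivity) (by positivity)]
      have : v ^ 4 ≤ 100 * s ^ 2 := by
        have := mul_self_le_mul_self (sq_nonneg v) hv
        nlinarith
      nlinarith [mul_le_mul_of_nonneg_right this (sq_nonneg s)]
  have hi : ∀ i, (s + 1 + 2 * z i) ^ (-α) + (s + 1 - 2 * z i) ^ (-α) ≤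
      s ^ (-α) * (2 - 2 * α / s + 2 * b * (1 + 4 * z i ^ 2) / s ^ 2 + 200 * D / s ^ 2) := by
    intro i
    have hzi := hz i
    have a1 := hη2 (1 + 2 * z i) (by nlinarith [sq_nonneg (1 - 2 * z i)])
    have a2 := hη2 (1 - 2 * z i) (by nlinarith [sq_nonneg (1 + 2 * z i)])
    obtain ⟨p1, t1⟩ := hT _ a1.1
    obtain ⟨p2, t2⟩ := hT _ a2.1
    rw [show s + 1 + 2 * z i = s + (1 + 2 * z i) by ring,
      show s + 1 - 2 * z i = s + (1 - 2 * z i) by ring, hfac _ p1, hfac _ p2, ← mul_add]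
    apply mul_le_mul_of_nonneg_left _ (by positivity)
    have e1 := mul_le_mul_of_nonneg_left a1.2 hD
    have e2 := mul_le_mul_of_nonneg_left a2.2 hD
    have e3 : 0 ≤ c * (((1 + 2 * z i) / s) ^ 3 + ((1 - 2 * z i) / s) ^ 3) := by
      have : ((1 + 2 * z i) / s) ^ 3 + ((1 - 2 * z i) / s) ^ 3 = (2 + 24 * z i ^ 2) / s ^ 3 := by
        field_simp; ring
      rw [this]; positivity
    have e4 : b * ((1 + 2 * z i) / s) ^ 2 + b * ((1 - 2 * z i) / s) ^ 2 = 2 * b * (1 + 4 * z i ^ 2) / s ^ 2 := by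
      field_simp; ring
    have e5 : α * ((1 + 2 * z i) / s) + α * ((1 - 2 * z i) / s) = 2 * α / s := by
      field_simp; ring
    have e6 : D * (100 / s ^ 2) + D * (100 / s ^ 2) = 200 * D / s ^ 2 := by ring
    linarith
  refine (Finset.sum_le_sum fun i _ => hi i).trans ?_
  rw [← Finset.mul_sum, mul_comm (2 * (d : ℝ))]
  apply mul_le_mul_of_nonneg_left _ (by positivity)
  have hsum : ∑ i, (2 - 2 * α / s + 2 * b * (1 + 4 * z i ^ 2) / s ^ 2 + 200 * D / s ^ 2) =
      2 * d + (2 * b * d - 8 * b * K + 200 * D * d) / s ^ 2 := by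
    simp only [Finset.sum_add_distrib, Finset.sum_sub_distrib, Finset.sum_const, Finset.card_univ,
      Fintype.card_fin, nsmul_eq_mul, ← Finset.sum_div, ← Finset.mul_sum]
    have : ∑ j, z j ^ 2 = s - K := by linarith
    rw [this]
    have hdα : (d : ℝ) = 2 * α + 2 := by rw [hα]; ring
    rw [hb, hdα]
    field_simp
    ring
  rw [hsum]
  have : (2 * b * d - 8 * b * K + 200 * D * d) / s ^ 2 ≤ 0 :=
    div_nonpos_of_nonpos_of_nonneg (by linarith) (by positivity)
  linarith

/-- Average over the neighbours of `x`. -/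
noncomputable def nbAvg (d : ℕ) (g : Pt d → ℝ) (x : Pt d) : ℝ :=
  (∑ i : Fin d, (g (x + Pi.single i 1) + g (x + Pi.single i (-1)))) / (2 * d)

lemma nbAvg_mono (d : ℕ) {g h : Pt d → ℝ} (x : Pt d) (H : ∀ y, g y ≤ h y) :
    nbAvg d g x ≤ nbAvg d h x := by
  unfold nbAvg
  gcongr <;> apply H

open Classical in
/-- Probability of avoiding `A` at times `1, ..., T`, defined by first-step recursion. -/
noncomputable def avoid (d : ℕ) (A : Set (Pt d)) : ℕ → Pt d → ℝ
  | 0, _ => 1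
  | T + 1, x => nbAvg d (fun y => if y ∈ A then 0 else avoid d A T y) x

lemma wpos_cons (d T : ℕ) (x e : Pt d) (s : Fin T → Pt d) (t : ℕ) :
    wpos d x (Fin.cons e s : Fin (T + 1) → Pt d) (t + 1) = wpos d (x + e) s t := by
  unfold wpos
  rw [Finset.sum_filter, Finset.sum_filter, Fin.sum_univ_succ]
  simp [add_assoc]

lemma wpos_zero (d T : ℕ) (x : Pt d) (s : Fin T → Pt d) : wpos d x s 0 = x := by
  simp [wpos]

/-- Enumeration of the steps. -/
noncomputable def dirEquiv (d : ℕ) : Fin d × Bool ≃ Dir d :=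
  Equiv.ofBijective (fun p => ⟨Pi.single p.1 (if p.2 then 1 else -1), p.1, by
    cases p.2 <;> simp⟩) (by
    constructor
    · rintro ⟨i, a⟩ ⟨j, b⟩ h
      have h1 := congrFun (congrArg Subtype.val h) i
      simp only at h1
      have hij : i = j := by
        by_contra hne
        rw [Pi.single_eq_same, Pi.single_eq_of_ne hne] at h1
        cases a <;> simp at h1
      subst hij
      simp only [Pi.single_eq_same] at h1
      cases a <;> cases b <;> simp at h1 ⊢
    · rintro ⟨s, i, h | h⟩
      · exact ⟨(i, true), by simp [h]⟩
      · exact ⟨(i, false), by simp [h]⟩)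

noncomputable instance (d : ℕ) : Fintype (Dir d) := Fintype.ofEquiv _ (dirEquiv d)

lemma sum_dir (d : ℕ) (g : Pt d → ℝ) :
    ∑ e : Dir d, g e = ∑ i : Fin d, (g (Pi.single i 1) + g (Pi.single i (-1))) := by
  rw [← (dirEquiv d).sum_comp, Fintype.sum_prod_type]
  refine Finset.sum_congr rfl fun i _ => ?_
  rw [Fintype.sum_bool]
  rfl

lemma finite_steps (d T : ℕ) (P : (Fin T → Pt d) → Prop) :
    Finite {s : Fin T → Pt d // (∀ i, s i ∈ Dir d) ∧ P s} :=
  Finite.of_injective (β := Fin T → Dir d) (fun s i => ⟨s.1 i, s.2.1 i⟩) (by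
    intro s t h
    ext i : 2
    have := congrFun h i
    simpa using this)

/-- Splitting off the first step. -/
def stepEquiv (d T : ℕ) (P : (Fin (T + 1) → Pt d) → Prop) :
    {s : Fin (T + 1) → Pt d // (∀ i, s i ∈ Dir d) ∧ P s} ≃
      Σ e : Dir d, {s : Fin T → Pt d // (∀ i, s i ∈ Dir d) ∧ P (Fin.cons (e : Pt d) s)} where
  toFun s := ⟨⟨s.1 0, s.2.1 0⟩, ⟨Fin.tail s.1, fun i => s.2.1 i.succ, by
    simpa using s.2.2⟩⟩
  invFun p := ⟨Fin.cons (p.1 : Pt d) p.2.1, by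
    intro i; refine Fin.cases ?_ (fun j => ?_) i
    · simpa using p.1.2
    · simpa using p.2.2.1 j, p.2.2.2⟩
  left_inv s := by ext : 1; simp
  right_inv p := by
    obtain ⟨e, s, hs⟩ := p
    rfl

lemma prob_succ (d T : ℕ) (P : (Fin (T + 1) → Pt d) → Prop) :
    prob d (T + 1) P = (∑ e : Dir d, prob d T (fun s => P (Fin.cons (e : Pt d) s))) / (2 * d) := by
  unfold prob
  have := fun e : Dir d => finite_steps d T (fun s => P (Fin.cons (e : Pt d) s))
  rw [Nat.card_congr (stepEquiv d T P), Nat.card_sigma]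
  rw [← Finset.sum_div, div_div, pow_succ]
  push_cast
  rfl

lemma prob_false (d T : ℕ) (P : (Fin T → Pt d) → Prop) (h : ∀ s, ¬ P s) : prob d T P = 0 := by
  unfold prob
  have : IsEmpty {s : Fin T → Pt d // (∀ i, s i ∈ Dir d) ∧ P s} := ⟨fun s => h _ s.2.2⟩
  simp

open Classical in
lemma prob_avoid (d : ℕ) (A : Set (Pt d)) (T : ℕ) (x : Pt d) :
    prob d T (fun s => ∀ t, 1 ≤ t → t ≤ T → wpos d x s t ∉ A) = avoid d A T x := by
  induction T generalizing x with
  | zero =>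
    unfold prob avoid
    have hu : Unique {s : Fin 0 → Pt d // (∀ i, s i ∈ Dir d) ∧
        ∀ t, 1 ≤ t → t ≤ 0 → wpos d x s t ∉ A} :=
      { default := ⟨Fin.elim0, fun i => i.elim0, fun t h1 h2 => by omega⟩
        uniq := fun s => Subtype.ext (Subsingleton.elim _ _) }
    rw [Nat.card_unique]
    simp
  | succ T ih =>
    rw [prob_succ, avoid, nbAvg]
    congr 1
    rw [← sum_dir d (fun e => if x + e ∈ A then 0 else avoid d A T (x + e))]
    refine Finset.sum_congr rfl fun e _ => ?_
    split_ifs with h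
    · apply prob_false
      intro s hs
      have := hs (0 + 1) le_rfl (by omega)
      rw [wpos_cons, wpos_zero] at this
      exact this h
    · rw [← ih]
      congr 1
      ext s
      constructor
      · intro hs t h1 h2
        have := hs (t + 1) (by omega) (by omega)
        rwa [wpos_cons] at this
      · intro hs t h1 h2
        obtain ⟨u, rfl⟩ : ∃ u, t = u + 1 := ⟨t - 1, by omega⟩
        rw [wpos_cons]
        rcases Nat.eq_zero_or_pos u with rfl | hu
        · rwa [wpos_zero]
        · exact hs u hu (by omega)

lemma avoid_nonneg (d : ℕ) (A : Set (Pt d)) (T : ℕ) (x : Pt d) : 0 ≤ avoid d A T x := by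
  induction T generalizing x with
  | zero => simp [avoid]
  | succ T ih =>
    rw [avoid, nbAvg]
    refine div_nonneg (Finset.sum_nonneg fun i _ => add_nonneg ?_ ?_) (by positivity) <;>
    · split_ifs
      · exact le_rfl
      · exact ih _

lemma nbAvg_one (d : ℕ) (hd : 0 < d) (x : Pt d) : nbAvg d (fun _ => 1) x = 1 := by
  have : (d : ℝ) ≠ 0 := by positivity
  simp [nbAvg]
  field_simp
  norm_num

lemma avoid_le_one (d : ℕ) (hd : 0 < d) (A : Set (Pt d)) (T : ℕ) (x : Pt d) :
    avoid d A T x ≤ 1 := by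
  induction T generalizing x with
  | zero => simp [avoid]
  | succ T ih =>
    rw [avoid, ← nbAvg_one d hd x]
    apply nbAvg_mono
    intro y
    split_ifs
    · norm_num
    · exact ih y

lemma avoid_empty (d : ℕ) (hd : 0 < d) (T : ℕ) (x : Pt d) : avoid d ∅ T x = 1 := by
  induction T generalizing x with
  | zero => simp [avoid]
  | succ T ih =>
    rw [avoid]
    simp only [Set.mem_empty_iff_false, if_false, ih]
    exact nbAvg_one d hd x

lemma avoid_anti (d : ℕ) {A B : Set (Pt d)} (h : A ⊆ B) (T : ℕ) (x : Pt d) :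
    avoid d B T x ≤ avoid d A T x := by
  induction T generalizing x with
  | zero => simp [avoid]
  | succ T ih =>
    rw [avoid, avoid]
    apply nbAvg_mono
    intro y
    split_ifs with h1 h2 h2
    · exact le_rfl
    · exact avoid_nonneg _ _ _ _
    · exact absurd (h h2) h1
    · exact ih y

lemma avoid_succ_le (d : ℕ) (hd : 0 < d) (A : Set (Pt d)) (T : ℕ) (x : Pt d) :
    avoid d A (T + 1) x ≤ avoid d A T x := by
  induction T generalizing x with
  | zero => rw [avoid.eq_1]; exact avoid_le_one d hd _ _ _
  | succ T ih =>
    rw [avoid, avoid]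
    apply nbAvg_mono
    intro y
    split_ifs
    · exact le_rfl
    · exact ih y

open Classical in
/-- Comparison of avoidance probabilities through a superharmonic function. -/
lemma avoid_compare (d : ℕ) (hd : 0 < d) (A V : Set (Pt d)) (F : Pt d → ℝ) (h0 : ∀ y, 0 ≤ F y)
    (h1 : ∀ y ∈ V, 1 ≤ F y) (hs : ∀ y, nbAvg d F y ≤ F y) (T : ℕ) (x : Pt d) :
    avoid d A T x - F x ≤ avoid d (A ∪ V) T x := by
  induction T generalizing x with
  | zero => simp [avoid, h0]
  | succ T ih =>
    have : avoid d A (T + 1) x - F x ≤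
        nbAvg d (fun y => (if y ∈ A then 0 else avoid d A T y) - F y) x := by
      have e : nbAvg d (fun y => (if y ∈ A then 0 else avoid d A T y) - F y) x
          = avoid d A (T + 1) x - nbAvg d F x := by
        rw [avoid]
        unfold nbAvg
        rw [← sub_div, ← Finset.sum_sub_distrib]
        congr 1
        refine Finset.sum_congr rfl fun i _ => ?_
        ring
      rw [e]
      linarith [hs x]
    refine this.trans ?_
    rw [avoid]
    apply nbAvg_mono
    intro y
    by_cases hA : y ∈ A
    · simp [hA, h0]
    by_cases hV : y ∈ V
    · simp only [hA, hV, if_false, Set.mem_union, or_true, if_true]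
      linarith [h1 y hV, avoid_le_one d hd A T y]
    · simpa [hA, hV] using ih y

lemma esc_eq (d : ℕ) (A : Set (Pt d)) (x : Pt d) (hx : x ∈ A) :
    esc d A x = ⨅ T : ℕ, avoid d A T x := by
  unfold esc
  rw [if_pos hx]
  simp only [prob_avoid]

lemma bdd_avoid (d : ℕ) (A : Set (Pt d)) (x : Pt d) :
    BddBelow (Set.range fun T : ℕ => avoid d A T x) :=
  ⟨0, by rintro _ ⟨T, rfl⟩; exact avoid_nonneg _ _ _ _⟩

lemma esc_nonneg (d : ℕ) (A : Set (Pt d)) (x : Pt d) : 0 ≤ esc d A x := by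
  by_cases hx : x ∈ A
  · rw [esc_eq d A x hx]
    exact le_ciInf fun T => avoid_nonneg _ _ _ _
  · simp [esc, hx]

lemma esc_anti (d : ℕ) {A B : Set (Pt d)} (h : A ⊆ B) (x : Pt d) (hx : x ∈ A) :
    esc d B x ≤ esc d A x := by
  rw [esc_eq d A x hx, esc_eq d B x (h hx)]
  exact ciInf_mono (bdd_avoid d B x) fun T => avoid_anti d h T x

lemma esc_compare (d : ℕ) (hd : 0 < d) (A V : Set (Pt d)) (F : Pt d → ℝ) (h0 : ∀ y, 0 ≤ F y)
    (h1 : ∀ y ∈ V, 1 ≤ F y) (hs : ∀ y, nbAvg d F y ≤ F y) (x : Pt d) (hx : x ∈ A) :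
    esc d A x - F x ≤ esc d (A ∪ V) x := by
  rw [esc_eq d A x hx, esc_eq d (A ∪ V) x (Or.inl hx)]
  refine le_ciInf fun T => ?_
  have := ciInf_le (bdd_avoid d A x) T
  linarith [avoid_compare d hd A V F h0 h1 hs T x]

/-- Existence of a superharmonic function for hitting a point. -/
lemma exists_super (d : ℕ) (hd : 3 ≤ d) : ∃ M : ℝ, 0 < M ∧ ∃ f : Pt d → ℝ, (∀ z, 0 ≤ f z) ∧
    f 0 = 1 ∧ (∀ z, nbAvg d f z ≤ f z) ∧
    (∀ z (r : ℝ), 0 < r → r ^ 2 ≤ ∑ i, (z i : ℝ) ^ 2 → f z ≤ M * r ^ ((2 : ℝ) - d)) := by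
  obtain ⟨K, hK, hsup⟩ := superharm_aux d hd
  have hd' : (3 : ℝ) ≤ d := by exact_mod_cast hd
  have hK0 : 0 < K := by linarith
  obtain ⟨β, hβ⟩ : ∃ β : ℝ, β = -((d : ℝ) - 2) / 2 := ⟨_, rfl⟩
  rw [← hβ] at hsup
  have hβ0 : β < 0 := by rw [hβ]; linarith
  have hq : ∀ z : Pt d, 0 ≤ ∑ j, (z j : ℝ) ^ 2 := fun z => Finset.sum_nonneg fun _ _ => sq_nonneg _
  have hKb : 0 < K ^ β := by positivity
  refine ⟨(K ^ β)⁻¹, by positivity, fun z => (K ^ β)⁻¹ * ((∑ j, (z j : ℝ) ^ 2) + K) ^ β, ?_, ?_, ?_, ?_⟩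
  · intro z
    have := hq z
    positivity
  · simp [hKb.ne']
  · intro z
    have hstep : ∀ (i : Fin d) (a : ℤ), ∑ j, (((z + Pi.single i a : Pt d) j : ℤ) : ℝ) ^ 2 =
        (∑ j, (z j : ℝ) ^ 2) + a ^ 2 + 2 * a * z i := by
      intro i a
      have : ∀ j, (((z + Pi.single i a : Pt d) j : ℤ) : ℝ) ^ 2 =
          (z j : ℝ) ^ 2 + if j = i then (a : ℝ) ^ 2 + 2 * a * z i else 0 := by
        intro j
        by_cases h : j = i
        · subst h; simp; ring
        · simp [h]
      rw [Finset.sum_congr rfl fun j _ => this j, Finset.sum_add_distrib]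
      simp
      ring
    unfold nbAvg
    simp only [hstep]
    rw [div_le_iff₀ (by positivity)]
    have := mul_le_mul_of_nonneg_left (hsup (fun j => (z j : ℝ))) (inv_pos.2 hKb).le
    rw [Finset.mul_sum] at this
    refine (le_of_eq ?_).trans (this.trans (le_of_eq (by ring)))
    refine Finset.sum_congr rfl fun i _ => ?_
    push_cast
    rw [mul_add]
    congr 3 <;> ring
  · intro z r hr hz
    refine mul_le_mul_of_nonneg_left ?_ (by positivity)
    have : r ^ ((2 : ℝ) - d) = (r ^ 2) ^ β := by
      rw [← Real.rpow_natCast r 2, ← Real.rpow_mul hr.le, hβ]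
      congr 1
      push_cast; ring
    rw [this]
    exact Real.rpow_le_rpow_of_nonpos (by positivity) (by linarith) hβ0.le

lemma nbAvg_sum_super (d : ℕ) (f : Pt d → ℝ) (hf : ∀ z, nbAvg d f z ≤ f z) (V : Finset (Pt d))
    (x : Pt d) : nbAvg d (fun z => ∑ y ∈ V, f (z - y)) x ≤ ∑ y ∈ V, f (x - y) := by
  have : nbAvg d (fun z => ∑ y ∈ V, f (z - y)) x = ∑ y ∈ V, nbAvg d f (x - y) := by
    unfold nbAvg
    rw [← Finset.sum_div, Finset.sum_comm]
    congr 1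
    refine Finset.sum_congr rfl fun i _ => ?_
    rw [← Finset.sum_add_distrib]
    refine Finset.sum_congr rfl fun y _ => ?_
    rw [add_sub_right_comm, add_sub_right_comm]
  rw [this]
  exact Finset.sum_le_sum fun y _ => hf _

open Classical in
lemma avoid_step (d : ℕ) (hd : 0 < d) (A : Set (Pt d)) (T : ℕ) (x : Pt d) (i : Fin d)
    (h : x + Pi.single i 1 ∉ A) :
    (2 * d : ℝ)⁻¹ * avoid d A T (x + Pi.single i 1) ≤ avoid d A (T + 1) x := by
  rw [avoid, nbAvg, div_eq_inv_mul]
  refine mul_le_mul_of_nonneg_left ?_ (by positivity)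
  have hnn : ∀ y, 0 ≤ (if y ∈ A then 0 else avoid d A T y) := by
    intro y; split_ifs
    · exact le_rfl
    · exact avoid_nonneg _ _ _ _
  refine le_trans ?_ (Finset.single_le_sum (fun j _ => add_nonneg (hnn _) (hnn _))
    (Finset.mem_univ i))
  rw [if_neg h]
  linarith [hnn (x + Pi.single i (-1))]

lemma avoid_line (d : ℕ) (hd : 0 < d) (A : Set (Pt d)) (T : ℕ) (x : Pt d) (i : Fin d) (m : ℕ)
    (h : ∀ j : ℕ, 1 ≤ j → j ≤ m → x + Pi.single i (j : ℤ) ∉ A) :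
    ((2 * d : ℝ)⁻¹) ^ m * avoid d A T (x + Pi.single i (m : ℤ)) ≤ avoid d A (T + m) x := by
  induction m generalizing T with
  | zero => simp
  | succ m ih =>
    have h1 := ih (T + 1) (fun j a b => h j a (by omega))
    have e : x + Pi.single i ((m + 1 : ℕ) : ℤ) = x + Pi.single i (m : ℤ) + Pi.single i 1 := by
      rw [add_assoc, ← Pi.single_add]; push_cast; rfl
    have h2 := avoid_step d hd A T (x + Pi.single i (m : ℤ)) i (by
      rw [← e]; exact h (m + 1) (by omega) le_rfl)
    rw [← e] at h2
    rw [show T + (m + 1) = T + 1 + m by ring]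
    refine le_trans ?_ h1
    rw [pow_succ, mul_assoc]
    exact mul_le_mul_of_nonneg_left h2 (by positivity)

/-- A coordinate along which a point goes away from `A`. -/
lemma good_coord (d : ℕ) (hd : 3 ≤ d) (A : Finset (Pt d)) (hA : A.card ≤ 3) (x : Pt d)
    (hx : x ∈ A) : ∃ i : Fin d, ∀ y ∈ A, ∀ j : ℕ,
      (j : ℝ) ^ 2 / 2 ≤ ∑ k, (((x + Pi.single i (j : ℤ) - y : Pt d) k : ℤ) : ℝ) ^ 2 := by
  classical
  set bad : Pt d → Finset (Fin d) := fun y =>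
    Finset.univ.filter fun i => ∑ k, (y k - x k) ^ 2 < 2 * (y i - x i) ^ 2 with hbad
  have hb1 : ∀ y, (bad y).card ≤ 1 := by
    intro y
    rw [Finset.card_le_one]
    intro a ha b hb
    by_contra hne
    simp only [hbad, Finset.mem_filter, Finset.mem_univ, true_and] at ha hb
    have : ∑ k ∈ {a, b}, (y k - x k) ^ 2 ≤ ∑ k, (y k - x k) ^ 2 :=
      Finset.sum_le_sum_of_subset_of_nonneg (Finset.subset_univ _) fun _ _ _ => sq_nonneg _
    rw [Finset.sum_pair hne] at this
    linarith
  have hcard : ((A.erase x).biUnion bad).card < (Finset.univ : Finset (Fin d)).card := by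
    have h1 := Finset.card_biUnion_le_card_mul (A.erase x) bad 1 fun y _ => hb1 y
    have h2 := Finset.card_erase_of_mem hx
    rw [Finset.card_univ, Fintype.card_fin]
    omega
  obtain ⟨i, -, hi⟩ := Finset.exists_mem_notMem_of_card_lt_card hcard
  refine ⟨i, fun y hy j => ?_⟩
  have hgood : 2 * (y i - x i) ^ 2 ≤ ∑ k, (y k - x k) ^ 2 := by
    by_cases hyx : y = x
    · subst hyx; simp
    · by_contra hlt
      apply hi
      rw [Finset.mem_biUnion]
      exact ⟨y, Finset.mem_erase.2 ⟨hyx, hy⟩, by simp [hbad]; linarith⟩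
  have hgood' : 2 * ((y i : ℝ) - x i) ^ 2 ≤ ∑ k, ((y k : ℝ) - x k) ^ 2 := by exact_mod_cast hgood
  have hstep : ∑ k, (((x + Pi.single i (j : ℤ) - y : Pt d) k : ℤ) : ℝ) ^ 2 =
      (∑ k, ((y k : ℝ) - x k) ^ 2) + ((j : ℝ) ^ 2 - 2 * j * (y i - x i)) := by
    have : ∀ k, (((x + Pi.single i (j : ℤ) - y : Pt d) k : ℤ) : ℝ) ^ 2 =
        ((y k : ℝ) - x k) ^ 2 + if k = i then (j : ℝ) ^ 2 - 2 * j * (y i - x i) else 0 := by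
      intro k
      by_cases h : k = i
      · subst h; simp; ring
      · simp [h]; ring
    rw [Finset.sum_congr rfl fun k _ => this k, Finset.sum_add_distrib]
    simp
  rw [hstep]
  nlinarith [sq_nonneg (2 * ((y i : ℝ) - x i) - j)]

lemma esc_lower (d : ℕ) (hd : 3 ≤ d) : ∃ δ : ℝ, 0 < δ ∧ ∀ (A : Finset (Pt d)), A.card ≤ 3 →
    ∀ x ∈ A, δ ≤ esc d (↑A) x := by
  have hd' : (3 : ℝ) ≤ d := by exact_mod_cast hd
  have hd0 : 0 < d := by omega
  obtain ⟨M, hM, f, f0, f1, fs, fb⟩ := exists_super d hd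
  obtain ⟨m, hm1, hm⟩ : ∃ m : ℕ, 1 ≤ m ∧ 3 * (M * ((m : ℝ) / 2) ^ ((2 : ℝ) - d)) ≤ 1 / 2 := by
    refine ⟨⌈12 * M + 2⌉₊, Nat.one_le_iff_ne_zero.2 (by positivity), ?_⟩
    have hc := Nat.le_ceil (12 * M + 2)
    set m : ℝ := (⌈12 * M + 2⌉₊ : ℝ)
    have h1 : (m / 2) ^ ((2 : ℝ) - d) ≤ (m / 2) ^ (-1 : ℝ) :=
      Real.rpow_le_rpow_of_exponent_le (by linarith) (by linarith)
    rw [Real.rpow_neg_one] at h1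
    have h2 : 3 * (M * (m / 2)⁻¹) ≤ 1 / 2 := by
      have : 0 < m := by linarith
      rw [inv_div, ← mul_assoc, ← mul_div_assoc, div_le_iff₀ this]
      linarith
    refine le_trans ?_ h2
    gcongr
  refine ⟨((2 * d : ℝ)⁻¹) ^ m * (1 / 2), by positivity, fun A hA x hx => ?_⟩
  obtain ⟨i, hi⟩ := good_coord d hd A hA x hx
  rw [esc_eq d _ x (by exact_mod_cast hx)]
  refine le_ciInf fun T => ?_
  have hmono : avoid d (↑A) (T + m) x ≤ avoid d (↑A) T x :=
    antitone_nat_of_succ_le (f := fun T => avoid d (↑A) T x) (fun T => avoid_succ_le d hd0 (↑A) T x) (Nat.le_add_right T m)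
  refine le_trans ?_ hmono
  refine le_trans ?_ (avoid_line d hd0 (↑A) T x i m ?_)
  · refine mul_le_mul_of_nonneg_left ?_ (by positivity)
    have hcmp := avoid_compare d hd0 ∅ (↑A) (fun z => ∑ y ∈ A, f (z - y))
      (fun z => Finset.sum_nonneg fun y _ => f0 _)
      (fun z hz => by
        have := Finset.single_le_sum (f := fun y => f (z - y)) (fun y _ => f0 _) (Finset.mem_coe.1 hz)
        simpa [f1] using this)
      (nbAvg_sum_super d f fs A) T (x + Pi.single i (m : ℤ))
    rw [Set.empty_union, avoid_empty d hd0] at hcmp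
    refine le_trans ?_ hcmp
    have hsum : ∑ y ∈ A, f (x + Pi.single i (m : ℤ) - y) ≤
        A.card • (M * ((m : ℝ) / 2) ^ ((2 : ℝ) - d)) := by
      apply Finset.sum_le_card_nsmul
      intro y hy
      have hm0 : (0 : ℝ) < m := by exact_mod_cast hm1
      apply fb _ _ (by positivity)
      refine le_trans ?_ (hi y hy m)
      nlinarith
    rw [nsmul_eq_mul] at hsum
    have hA' : (A.card : ℝ) ≤ 3 := by exact_mod_cast hA
    have : (A.card : ℝ) * (M * ((m : ℝ) / 2) ^ ((2 : ℝ) - d)) ≤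
        3 * (M * ((m : ℝ) / 2) ^ ((2 : ℝ) - d)) := by
      gcongr
    linarith
  · intro j hj _ hmem
    have := hi _ (Finset.mem_coe.1 hmem) j
    simp at this
    have hj' : (1 : ℝ) ≤ j := by exact_mod_cast hj
    nlinarith

lemma capa_eq (d : ℕ) (A : Finset (Pt d)) : capa d (↑A) = ∑ x ∈ A, esc d (↑A) x := by
  unfold capa
  exact Finset.tsum_subtype' A (fun x => esc d (↑A) x)

lemma setDist_le (d : ℕ) (A B : Finset (Pt d)) {x y : Pt d} (hx : x ∈ A) (hy : y ∈ B) :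
    setDist d A B ≤ dist0 d x y := by
  apply csInf_le
  · refine ⟨0, ?_⟩
    rintro r ⟨a, _, b, _, rfl⟩
    exact Real.sqrt_nonneg _
  · exact ⟨x, hx, y, hy, rfl⟩

lemma one_le_dist0 (d : ℕ) {x y : Pt d} (h : x ≠ y) : 1 ≤ dist0 d x y := by
  unfold dist0
  rw [Real.one_le_sqrt]
  obtain ⟨i, hi⟩ := Function.ne_iff.1 h
  have h1 : (1 : ℤ) ≤ (x i - y i) ^ 2 := by
    have : 0 < (x i - y i) ^ 2 := by
      have := sub_ne_zero.2 hi
      positivity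
    omega
  have h2 : (1 : ℝ) ≤ ((x i : ℝ) - y i) ^ 2 := by exact_mod_cast h1
  exact h2.trans (Finset.single_le_sum (f := fun i => ((x i : ℝ) - y i) ^ 2)
    (fun _ _ => sq_nonneg _) (Finset.mem_univ i))

lemma mem_others (d : ℕ) {k : ℕ} (C : Fin k → Finset (Pt d)) (i : Fin k) (y : Pt d) :
    y ∈ others d C i ↔ ∃ j, j ≠ i ∧ y ∈ C j := by
  unfold others
  simp only [Finset.mem_biUnion, Finset.mem_univ, true_and]
  refine exists_congr fun j => ?_
  by_cases h : j = i <;> simp [h]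

lemma one_le_sep (d n : ℕ) (C : ClusteringS d) (hC : IsClusteringConf d n C) (hk : 2 ≤ C.1) :
    1 ≤ sep d C.2 := by
  have : Nonempty (Fin C.1) := ⟨⟨0, by omega⟩⟩
  refine le_ciInf fun i => ?_
  apply le_csInf
  · obtain ⟨x, hx⟩ := hC.1 i
    have : Nontrivial (Fin C.1) := Fin.nontrivial_iff_two_le.2 hk
    obtain ⟨j, hj⟩ := exists_ne i
    obtain ⟨y, hy⟩ := hC.1 j
    exact ⟨_, x, hx, y, (mem_others d C.2 i y).2 ⟨j, hj, hy⟩, rfl⟩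
  · rintro r ⟨x, hx, y, hy, rfl⟩
    obtain ⟨j, hj, hy⟩ := (mem_others d C.2 i y).1 hy
    apply one_le_dist0
    rintro rfl
    exact Finset.disjoint_left.1 (hC.2.1 i j hj.symm) hx hy

lemma capa_le_capS (d : ℕ) (C : ClusteringS d) (hdis : ∀ i j, i ≠ j → Disjoint (C.2 i) (C.2 j)) :
    capa d (↑(confOf d C)) ≤ capS d C := by
  rw [capa_eq]
  unfold capS
  simp only [capa_eq]
  calc ∑ x ∈ confOf d C, esc d (↑(confOf d C)) x
      ≤ ∑ i, ∑ x ∈ C.2 i, esc d (↑(confOf d C)) x := by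
        refine le_of_eq (Finset.sum_biUnion ?_)
        exact fun a _ b _ hab => hdis a b hab
    _ ≤ _ := by
        refine Finset.sum_le_sum fun i _ => Finset.sum_le_sum fun x hx => ?_
        apply esc_anti d _ x (Finset.mem_coe.2 hx)
        exact Finset.coe_subset.2 (Finset.subset_biUnion_of_mem C.2 (Finset.mem_univ i))

/-- **Activation comparison.** For `d ≥ 5` there is `c = c(d) > 0` such that for any
clustering `C` (with at least two clusters, each with at most 3 elements) of an
`n`-element configuration in `ℤ^d` and any `x` in cluster `i`,
`H_{π(C)}(x) ≥ (1 − c n sep(C)^{2−d}) H_C(i,x)`. -/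
theorem activation_comparison (d : ℕ) (hd : 5 ≤ d) :
    ∃ c : ℝ, 0 < c ∧
      ∀ (n : ℕ) (C : ClusteringS d), IsClusteringConf d n C → 2 ≤ C.1 →
        (∀ i, (C.2 i).card ≤ 3) →
        ∀ (i : Fin C.1) (x : Pt d), x ∈ C.2 i →
          (1 - c * (n : ℝ) * sep d C.2 ^ ((2 : ℝ) - (d : ℝ))) * harmS d C i x ≤
            harm d (↑(confOf d C)) x := by
  have hd0 : 0 < d := by omega
  have hd' : (5 : ℝ) ≤ d := by exact_mod_cast hd
  obtain ⟨M, hM, f, f0, f1, fs, fb⟩ := exists_super d (by omega)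
  obtain ⟨δ, hδ, hesc⟩ := esc_lower d (by omega)
  refine ⟨M / δ, by positivity, ?_⟩
  intro n C hC hk h3 i x hx
  have hsep := one_le_sep d n C hC hk
  set A := C.2 i with hA
  set V := others d C.2 i with hV
  set r := sep d C.2 with hr
  have hU : (↑(confOf d C) : Set (Pt d)) = ↑A ∪ ↑V := by
    ext y
    simp only [Finset.mem_coe, Set.mem_union, hV, hA, mem_others, confOf, Finset.mem_biUnion,
      Finset.mem_univ, true_and]
    constructor
    · rintro ⟨j, hj⟩
      by_cases h : j = i
      · subst h; exact Or.inl hj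
      · exact Or.inr ⟨j, h, hj⟩
    · rintro (h | ⟨j, -, h⟩)
      · exact ⟨_, h⟩
      · exact ⟨_, h⟩
  have hVn : V.card ≤ n := by
    rw [← hC.2.2]
    apply Finset.card_le_card
    rw [← Finset.coe_subset, hU]
    exact Set.subset_union_right
  have hEA := hesc A (h3 i) x hx
  have hcmp := esc_compare d hd0 (↑A) (↑V) (fun z => ∑ y ∈ V, f (z - y))
      (fun z => Finset.sum_nonneg fun y _ => f0 _)
      (fun z hz => by
        have := Finset.single_le_sum (f := fun y => f (z - y)) (fun y _ => f0 _) (Finset.mem_coe.1 hz)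
        simpa [f1] using this)
      (nbAvg_sum_super d f fs V) x (Finset.mem_coe.2 hx)
  rw [← hU] at hcmp
  have hr0 : 0 < r := by linarith
  have hsum : ∑ y ∈ V, f (x - y) ≤ n * (M * r ^ ((2 : ℝ) - d)) := by
    have : ∑ y ∈ V, f (x - y) ≤ V.card • (M * r ^ ((2 : ℝ) - d)) := by
      apply Finset.sum_le_card_nsmul
      intro y hy
      apply fb _ _ hr0
      have h1 : r ≤ dist0 d x y := by
        refine le_trans ?_ (setDist_le d A V hx hy)
        exact ciInf_le (Set.finite_range _).bddBelow i
      unfold dist0 at h1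
      have h2 := (Real.le_sqrt' hr0).1 h1
      simpa using h2
    rw [nsmul_eq_mul] at this
    refine this.trans ?_
    have hVn' : (V.card : ℝ) ≤ n := by exact_mod_cast hVn
    gcongr
  set E := esc d (↑A) x with hE
  set EU := esc d (↑(confOf d C)) x with hEU
  have hp : 0 ≤ n * (M * r ^ ((2 : ℝ) - d)) := by positivity
  have hmain : (1 - M / δ * n * r ^ ((2 : ℝ) - d)) * E ≤ EU := by
    have h1 : n * (M * r ^ ((2 : ℝ) - d)) ≤ M / δ * n * r ^ ((2 : ℝ) - d) * E := by
      have e : M / δ * n * r ^ ((2 : ℝ) - d) * E = n * (M * r ^ ((2 : ℝ) - d)) * (E / δ) := by ring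
      rw [e]
      exact le_mul_of_one_le_right hp ((one_le_div hδ).2 hEA)
    linarith
  have hcU : 0 ≤ capa d (↑(confOf d C)) := by
    rw [capa_eq]; exact Finset.sum_nonneg fun _ _ => esc_nonneg _ _ _
  have hcS := capa_le_capS d C hC.2.1
  unfold harmS harm
  rw [← hA, ← hE, ← hEU]
  have hEU0 : 0 ≤ EU := esc_nonneg _ _ _
  rcases hcU.eq_or_lt with h0 | h0
  · have hz : EU = 0 := by
      have hxU : x ∈ confOf d C := by
        rw [← Finset.mem_coe, hU]; exact Or.inl hx
      have := Finset.single_le_sum (f := fun y => esc d (↑(confOf d C)) y)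
        (fun y _ => esc_nonneg _ _ _) hxU
      rw [← capa_eq, ← h0] at this
      exact le_antisymm this hEU0
    rw [hz, zero_div, ← mul_div_assoc]
    exact div_nonpos_of_nonpos_of_nonneg (hz ▸ hmain) (hcU.trans hcS)
  · rw [← mul_div_assoc]
    calc _ ≤ EU / capS d C := by gcongr; exact (hcU.trans hcS)
      _ ≤ _ := by gcongr

end HATFormal
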